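/- Any restricted-best-response fixed point is an ε-Nash equilibrium: let ε ∈ [0,1], let D* ⊆ V, and let x be a mixed strategy profile such that (a) for every i ∈ D*, u_i(x_i, x_{−i}) ≥ u_i(x̂_i, x_{−i}) for all x̂_i with Σ_j x̂_{ij} = 1 and x̂_{ii} ≥ ε, and (b) for every j ∉ D*, u_j(x_j, x_{−j}) ≥ u_j(x̂_j, x_{−j}) for all x̂_j with Σ_k x̂_{jk} = 1. Then x is an ε-Nash equilibrium: for every agent i and every mixed strategy x̂_i, u_i(x) ≥ (1−ε)·u_i(x̂_i, x_{−i}). -/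

import Mathlib

/-! The pure utility of an agent vanishes whenever she abstains (`pureUtil_of_abstain`), and all
other terms of her expected utility are monotone in her probabilities of voting and delegating.
So if `c * y j ≤ z j` for every `j`, then switching from `y` to `z` keeps at least the fraction `c`
of the expected utility (`mul_util_update_le`).

Given any deviation `y` of agent `i`, scale it by `1 - ε` and let `i` vote herself with all the
remaining probability. The resulting strategy `z` has total mass one, votes with probability at
least `ε`, and dominates `(1 - ε) * y` coordinatewise. It is therefore admissible in both
best-response hypotheses, and yields utility at least `1 - ε` times that of `y`. -/

open Finset

/-- The guru of agent `i` under pure profile `s` (where `s i = some j` means `i`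
delegates to `j`, with `s i = some i` meaning `i` votes herself, and `s i = none`
meaning `i` abstains): follow delegation arcs for `n` steps; the endpoint is the
guru provided it votes itself. -/
def guru {n : ℕ} (s : Fin n → Option (Fin n)) (i : Fin n) : Option (Fin n) :=
  ((fun o => Option.bind o s)^[n] (some i)).bind
    (fun j => if s j = some j then some j else none)

/-- Utility of agent `i` in the pure profile `s`: `u i (g i)` if the guru exists, else `0`. -/
def pureUtil {n : ℕ} (u : Fin n → Fin n → ℝ) (s : Fin n → Option (Fin n)) (i : Fin n) : ℝ :=
  (guru s i).elim 0 (u i)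

/-- A mixed strategy for a single agent: nonnegative, total probability at most one
(the residual probability is abstention). -/
def IsStrat {n : ℕ} (y : Fin n → ℝ) : Prop := (∀ j, 0 ≤ y j) ∧ (∑ j, y j) ≤ 1

/-- A mixed strategy profile. -/
def IsMixed {n : ℕ} (x : Fin n → Fin n → ℝ) : Prop := ∀ i, IsStrat (x i)

/-- Probability that the independent randomization `x` produces the pure profile `s`. -/
def prob {n : ℕ} (x : Fin n → Fin n → ℝ) (s : Fin n → Option (Fin n)) : ℝ :=
  ∏ i, (s i).elim (1 - ∑ j, x i j) (x i)

/-- Expected utility of agent `i` under the mixed profile `x`. -/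
def util {n : ℕ} (u x : Fin n → Fin n → ℝ) (i : Fin n) : ℝ :=
  ∑ s : Fin n → Option (Fin n), prob x s * pureUtil u s i

/-- Expected social welfare of the mixed profile `x`. -/
def SW {n : ℕ} (u x : Fin n → Fin n → ℝ) : ℝ := ∑ i, util u x i

/-- The set of social-welfare values achievable by mixed profiles; `OPT` is its greatest element. -/
def SWvals {n : ℕ} (u : Fin n → Fin n → ℝ) : Set ℝ :=
  {w | ∃ x, IsMixed x ∧ w = SW u x}

/-- `x` is an `ε`-Nash equilibrium. -/
def EpsNash {n : ℕ} (u : Fin n → Fin n → ℝ) (ε : ℝ) (x : Fin n → Fin n → ℝ) : Prop :=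
  ∀ i y, IsStrat y → util u x i ≥ (1 - ε) * util u (Function.update x i y) i

/-- `x` is an (exact, mixed) Nash equilibrium. -/
def NashEq {n : ℕ} (u x : Fin n → Fin n → ℝ) : Prop :=
  ∀ i y, IsStrat y → util u x i ≥ util u (Function.update x i y) i

lemma pureUtil_of_abstain {n : ℕ} (u : Fin n → Fin n → ℝ) (s : Fin n → Option (Fin n))
    (i : Fin n) (h : s i = none) : pureUtil u s i = 0 := by
  have hfix : ∀ m : ℕ, (fun o => Option.bind o s)^[m] none = none := fun m =>
    Function.iterate_fixed rfl m
  obtain ⟨m, rfl⟩ : ∃ m, n = m + 1 := ⟨n - 1, by have := i.pos; omega⟩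
  have hg : guru s i = none := by
    unfold guru
    rw [Function.iterate_succ_apply]
    simp [h, hfix]
  simp [pureUtil, hg]

lemma pureUtil_nonneg {n : ℕ} {u : Fin n → Fin n → ℝ} (hu : ∀ i j, 0 ≤ u i j)
    (s : Fin n → Option (Fin n)) (i : Fin n) : 0 ≤ pureUtil u s i := by
  unfold pureUtil
  cases guru s i with
  | none => simp
  | some j => simpa using hu i j

lemma prob_update {n : ℕ} (x : Fin n → Fin n → ℝ) (i : Fin n) (y : Fin n → ℝ)
    (s : Fin n → Option (Fin n)) :
    prob (Function.update x i y) s =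
      (s i).elim (1 - ∑ j, y j) y *
        ∏ k ∈ univ.erase i, (s k).elim (1 - ∑ j, x k j) (x k) := by
  unfold prob
  rw [← mul_prod_erase univ _ (mem_univ i)]
  congr 1
  · simp
  · refine prod_congr rfl fun k hk => ?_
    rw [Function.update_of_ne (ne_of_mem_erase hk)]

/-- Abstention mass is irrelevant here, since abstaining yields utility zero; hence no assumption
on the totals of `y` and `z` is needed. -/
lemma mul_util_update_le {n : ℕ} {u x : Fin n → Fin n → ℝ} (hu : ∀ i j, 0 ≤ u i j)
    (hx : IsMixed x) (i : Fin n) {y z : Fin n → ℝ} {c : ℝ} (hyz : ∀ j, c * y j ≤ z j) :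
    c * util u (Function.update x i y) i ≤ util u (Function.update x i z) i := by
  unfold util
  rw [mul_sum]
  refine sum_le_sum fun s _ => ?_
  rw [prob_update, prob_update]
  have hR : 0 ≤ ∏ k ∈ univ.erase i, (s k).elim (1 - ∑ j, x k j) (x k) := by
    refine prod_nonneg fun k _ => ?_
    cases s k with
    | none => simpa using (hx k).2
    | some j => exact (hx k).1 j
  cases h : s i with
  | none => simp [pureUtil_of_abstain u s i h]
  | some j =>
    simp only [Option.elim_some]
    rw [← mul_assoc, ← mul_assoc]
    exact mul_le_mul_of_nonneg_right (mul_le_mul_of_nonneg_right (hyz j) hR)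
      (pureUtil_nonneg hu s i)

/-- Any restricted-best-response fixed point is an ε-Nash equilibrium. -/
theorem stmt7 {n : ℕ} (ε : ℝ) (hε : ε ∈ Set.Icc (0:ℝ) 1)
    (u : Fin n → Fin n → ℝ) (hu : ∀ i j, 0 ≤ u i j ∧ u i j ≤ 1)
    (D : Set (Fin n)) (x : Fin n → Fin n → ℝ) (hx : IsMixed x)
    (ha : ∀ i ∈ D, ∀ y : Fin n → ℝ, (∀ j, 0 ≤ y j) → (∑ j, y j) = 1 → ε ≤ y i →
      util u x i ≥ util u (Function.update x i y) i)
    (hb : ∀ i ∉ D, ∀ y : Fin n → ℝ, (∀ j, 0 ≤ y j) → (∑ j, y j) = 1 →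
      util u x i ≥ util u (Function.update x i y) i) :
    EpsNash u ε x := by
  intro i y hy
  obtain ⟨hε0, hε1⟩ := hε
  obtain ⟨hy0, hy1⟩ := hy
  have hmass : ε ≤ 1 - (1 - ε) * ∑ j, y j := by nlinarith
  -- Scale `y` by `1 - ε` and put the remaining mass on voting.
  let z : Fin n → ℝ := fun j => (1 - ε) * y j + if j = i then 1 - (1 - ε) * ∑ k, y k else 0
  have hyz : ∀ j, (1 - ε) * y j ≤ z j := by
    intro j
    simp only [z]
    split_ifs <;> linarith
  have hy' : ∀ j, 0 ≤ (1 - ε) * y j := fun j => mul_nonneg (by linarith) (hy0 j)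
  have hz0 : ∀ j, 0 ≤ z j := fun j => (hy' j).trans (hyz j)
  have hz1 : ∑ j, z j = 1 := by
    simp [z, sum_add_distrib, ← mul_sum]
  have hzi : ε ≤ z i := by
    have := hy' i
    simp only [z, if_true]
    linarith
  have hbest : util u (Function.update x i z) i ≤ util u x i := by
    by_cases hi : i ∈ D
    · exact ha i hi z hz0 hz1 hzi
    · exact hb i hi z hz0 hz1
  exact (mul_util_update_le (fun i j => (hu i j).1) hx i hyz).trans hbest
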